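/- Let a > 0. For each m > 0 there exists a unique α(a,m) > 0 such that inf_{ξ∈ℝ} μ₁(a,m,α(a,m);ξ) = 0. Moreover α(a,m) = 1 if m ≤ 1, and Θ₀ < α(a,m) < 1 if m > 1, where Θ₀ = Θ(0) ∈ (0,1) is the de Gennes constant. -/

import Mathlib

open MeasureTheory Set Filter Topology

noncomputable section

/-- `B¹(ℝ₊)`-type regularity on the half line (smooth core):
`u`, `u'` and `t·u` are square integrable on `(0,∞)`. -/
def MemB1p (u : ℝ → ℝ) : Prop :=
  Differentiable ℝ u ∧
  IntegrableOn (fun t => (u t)^2) (Ioi 0) ∧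
  IntegrableOn (fun t => (deriv u t)^2) (Ioi 0) ∧
  IntegrableOn (fun t => t^2 * (u t)^2) (Ioi 0)

/-- The Robin quadratic form `q[γ,ξ]` of `-d²/dt² + (t-ξ)²` on `ℝ₊`. -/
def qRobin (γ ξ : ℝ) (u : ℝ → ℝ) : ℝ :=
  (∫ t in Ioi (0:ℝ), ((deriv u t)^2 + (t - ξ)^2 * (u t)^2)) + γ * (u 0)^2

/-- squared `L²(ℝ₊)` norm. -/
def np (u : ℝ → ℝ) : ℝ := ∫ t in Ioi (0:ℝ), (u t)^2

/-- Lowest Robin eigenvalue `λ₁(γ,ξ)`, defined variationally. -/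
def lambda1 (γ ξ : ℝ) : ℝ :=
  sInf {r : ℝ | ∃ u : ℝ → ℝ, MemB1p u ∧ np u ≠ 0 ∧ r = qRobin γ ξ u / np u}

/-- Lowest Neumann eigenvalue `λ₁^N(ξ)` (Robin with `γ = 0`). -/
def lambda1N (ξ : ℝ) : ℝ := lambda1 0 ξ

/-- Lowest Dirichlet eigenvalue `λ₁^D(ξ)`, defined variationally. -/
def lambda1D (ξ : ℝ) : ℝ :=
  sInf {r : ℝ | ∃ u : ℝ → ℝ, MemB1p u ∧ u 0 = 0 ∧ np u ≠ 0 ∧ r = qRobin 0 ξ u / np u}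

/-- The de Gennes constant `Θ₀ = inf_ξ λ₁^N(ξ)`. -/
def Theta0 : ℝ := sInf (Set.range lambda1N)

/-- `B¹(ℝ)`-type regularity on the whole line (smooth core). -/
def MemB1 (u : ℝ → ℝ) : Prop :=
  Differentiable ℝ u ∧
  Integrable (fun t => (u t)^2) ∧
  Integrable (fun t => (deriv u t)^2) ∧
  Integrable (fun t => t^2 * (u t)^2)

/-- The interface quadratic form `Q[a,m,α;ξ]` on `B¹(ℝ)`. -/
def QI (a m α ξ : ℝ) (u : ℝ → ℝ) : ℝ :=
  (∫ t in Ioi (0:ℝ), ((deriv u t)^2 + (t - ξ)^2 * (u t)^2 - α * (u t)^2)) +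
  ∫ t in Iio (0:ℝ), ((1/m) * ((deriv u t)^2 + (t - ξ)^2 * (u t)^2) + a * α * (u t)^2)

/-- squared `L²(ℝ)` norm. -/
def nR (u : ℝ → ℝ) : ℝ := ∫ t, (u t)^2

/-- Ground state energy `μ₁(a,m,α;ξ)` of the interface operator, defined variationally. -/
def mu1 (a m α ξ : ℝ) : ℝ :=
  sInf {r : ℝ | ∃ u : ℝ → ℝ, MemB1 u ∧ nR u ≠ 0 ∧ r = QI a m α ξ u / nR u}

lemma int_shift {μ : Measure ℝ} {u : ℝ → ℝ} (hu : Continuous u)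
    (h0 : Integrable (fun t => (u t)^2) μ) (h2 : Integrable (fun t => t^2 * (u t)^2) μ) (ξ : ℝ) :
    Integrable (fun t => (t - ξ)^2 * (u t)^2) μ := by
  refine Integrable.mono' ((h2.const_mul 2).add (h0.const_mul (2 * ξ^2))) (by fun_prop) ?_
  refine Eventually.of_forall fun t => ?_
  simp only [Pi.add_apply]
  rw [Real.norm_of_nonneg (by positivity)]
  nlinarith [sq_nonneg (u t), mul_nonneg (sq_nonneg (t + ξ)) (sq_nonneg (u t))]

lemma int_lin {μ : Measure ℝ} {u : ℝ → ℝ} (hu : Continuous u)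
    (h0 : Integrable (fun t => (u t)^2) μ) (h2 : Integrable (fun t => t^2 * (u t)^2) μ) (ξ : ℝ) :
    Integrable (fun t => (t - ξ) * (u t)^2) μ := by
  refine Integrable.mono' ((int_shift hu h0 h2 ξ).add h0) (by fun_prop) ?_
  refine Eventually.of_forall fun t => ?_
  simp only [Pi.add_apply]
  rw [norm_mul, Real.norm_eq_abs, Real.norm_of_nonneg (by positivity)]
  have : |t - ξ| ≤ (t-ξ)^2 + 1 := by
    rw [abs_le]; constructor <;> nlinarith [sq_nonneg (t - ξ - 1), sq_nonneg (t - ξ + 1)]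
  nlinarith [mul_le_mul_of_nonneg_right this (sq_nonneg (u t))]

lemma int_cross {μ : Measure ℝ} {u : ℝ → ℝ} (hu : Continuous u) (f : ℝ → ℝ) (hf : Continuous f)
    (h1 : Integrable (fun t => (deriv u t)^2) μ) (h2 : Integrable (fun t => (f t)^2 * (u t)^2) μ) :
    Integrable (fun t => f t * (2 * u t * deriv u t)) μ := by
  refine Integrable.mono' (h1.add h2) ?_ ?_
  · have := (measurable_deriv u).aestronglyMeasurable (μ := μ)
    fun_prop
  refine Eventually.of_forall fun t => ?_
  simp only [Pi.add_apply]
  rw [Real.norm_eq_abs, abs_le]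
  constructor <;> nlinarith [sq_nonneg (deriv u t + f t * u t), sq_nonneg (deriv u t - f t * u t)]

def PP (ξ : ℝ) (u : ℝ → ℝ) : ℝ := ∫ t in Ioi (0:ℝ), ((deriv u t)^2 + (t - ξ)^2 * (u t)^2)
def NN (ξ : ℝ) (u : ℝ → ℝ) : ℝ := ∫ t in Iio (0:ℝ), ((deriv u t)^2 + (t - ξ)^2 * (u t)^2)
def nm (u : ℝ → ℝ) : ℝ := ∫ t in Iio (0:ℝ), (u t)^2

lemma PP_nonneg (ξ : ℝ) (u : ℝ → ℝ) : 0 ≤ PP ξ u := integral_nonneg fun t => by positivity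
lemma NN_nonneg (ξ : ℝ) (u : ℝ → ℝ) : 0 ≤ NN ξ u := integral_nonneg fun t => by positivity
lemma np_nonneg (u : ℝ → ℝ) : 0 ≤ np u := integral_nonneg fun t => by positivity
lemma nm_nonneg (u : ℝ → ℝ) : 0 ≤ nm u := integral_nonneg fun t => by positivity
lemma nR_nonneg (u : ℝ → ℝ) : 0 ≤ nR u := integral_nonneg fun t => by positivity

lemma split_int {f : ℝ → ℝ} (hf : Integrable f) :
    ∫ t, f t = (∫ t in Ioi (0:ℝ), f t) + ∫ t in Iio (0:ℝ), f t := by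
  rw [← intervalIntegral.integral_Iic_add_Ioi (b := 0) hf.integrableOn hf.integrableOn,
    integral_Iic_eq_integral_Iio, add_comm]

lemma MemB1.int_en {u : ℝ → ℝ} (hu : MemB1 u) (ξ : ℝ) :
    Integrable (fun t => (deriv u t)^2 + (t - ξ)^2 * (u t)^2) :=
  hu.2.2.1.add (int_shift hu.1.continuous hu.2.1 hu.2.2.2 ξ)

lemma MemB1.toP {u : ℝ → ℝ} (hu : MemB1 u) : MemB1p u :=
  ⟨hu.1, hu.2.1.integrableOn, hu.2.2.1.integrableOn, hu.2.2.2.integrableOn⟩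

lemma nR_eq {u : ℝ → ℝ} (hu : MemB1 u) : nR u = np u + nm u := split_int hu.2.1

lemma QI_eq {u : ℝ → ℝ} (hu : MemB1 u) (a m α ξ : ℝ) :
    QI a m α ξ u = PP ξ u - α * np u + (1/m * NN ξ u + a * α * nm u) := by
  unfold QI PP NN np nm
  rw [integral_sub, integral_add (μ := volume.restrict (Iio 0)), integral_const_mul,
    integral_const_mul, integral_const_mul]
  · exact ((hu.int_en ξ).integrableOn).const_mul _
  · exact (hu.2.1.integrableOn).const_mul _
  · exact ((hu.int_en ξ).integrableOn)
  · exact (hu.2.1.integrableOn).const_mul _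

lemma osc_deriv {u : ℝ → ℝ} (hu : Differentiable ℝ u) (ξ t : ℝ) :
    HasDerivAt (fun t => (t - ξ) * (u t)^2) ((u t)^2 + (t - ξ) * (2 * u t * deriv u t)) t := by
  have h := ((hasDerivAt_id t).sub_const ξ).mul ((hu t).hasDerivAt.pow 2)
  exact h.congr_deriv (by simp)

lemma osc {u : ℝ → ℝ} (hu : MemB1 u) (ξ : ℝ) : nR u ≤ PP ξ u + NN ξ u := by
  have hc := hu.1.continuous
  have hs := int_shift hc hu.2.1 hu.2.2.2 ξ
  have hF' : Integrable (fun t => (u t)^2 + (t - ξ) * (2 * u t * deriv u t)) :=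
    hu.2.1.add (int_cross hc (fun t => t - ξ) (by fun_prop) hu.2.2.1 hs)
  have h0 := integral_eq_zero_of_hasDerivAt_of_integrable (fun t => osc_deriv hu.1 ξ t)
    hF' (int_lin hc hu.2.1 hu.2.2.2 ξ)
  have h1 : ∫ t, ((u t)^2 - ((u t)^2 + (t - ξ) * (2 * u t * deriv u t))) = nR u := by
    rw [integral_sub hu.2.1 hF', h0, sub_zero]; rfl
  unfold PP NN
  rw [← split_int (hu.int_en ξ), ← h1]
  refine integral_mono (hu.2.1.sub hF') (hu.int_en ξ) fun t => ?_
  show (u t)^2 - ((u t)^2 + (t - ξ) * (2 * u t * deriv u t)) ≤ (deriv u t)^2 + (t - ξ)^2 * (u t)^2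
  nlinarith [sq_nonneg (deriv u t + (t - ξ) * u t)]

/-- The multiplier used for the uniform lower bound. -/
def mf (ξ t : ℝ) : ℝ := (1/4) * ((t - ξ) / (1 + (t - ξ)^2) + 1)

lemma mf_bound (ξ t : ℝ) : 0 ≤ mf ξ t ∧ mf ξ t ≤ 3/8 := by
  unfold mf
  have h : 0 < 1 + (t-ξ)^2 := by positivity
  have h1 : (t - ξ) / (1 + (t - ξ)^2) ≤ 1/2 := by
    rw [div_le_iff₀ h]; nlinarith [sq_nonneg (t - ξ - 1)]
  have h2 : -(1/2) ≤ (t - ξ) / (1 + (t - ξ)^2) := by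
    rw [le_div_iff₀ h]; nlinarith [sq_nonneg (t - ξ + 1)]
  constructor <;> linarith

lemma mf_deriv (ξ t : ℝ) :
    HasDerivAt (mf ξ) ((1/4) * ((1 - (t-ξ)^2) / (1 + (t - ξ)^2)^2)) t := by
  have h : 1 + (t-ξ)^2 ≠ 0 := by positivity
  have h0 := (hasDerivAt_id t).sub_const ξ
  have h1 := ((h0.div ((h0.pow 2).const_add 1) h).add_const 1).const_mul (1/4)
  exact h1.congr_deriv (by simp; ring)

lemma mf_dbound (ξ t : ℝ) : |(1/4) * ((1 - (t-ξ)^2) / (1 + (t - ξ)^2)^2)| ≤ 1 ∧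
    (1/4) * (1 - 3 * (t-ξ)^2) ≤ (1/4) * ((1 - (t-ξ)^2) / (1 + (t - ξ)^2)^2) := by
  set s := (t-ξ)^2 with hs
  have hs0 : 0 ≤ s := sq_nonneg _
  have h : 0 < (1 + s)^2 := by positivity
  have h1 : (1 - s) / (1 + s)^2 ≤ 1 := by rw [div_le_iff₀ h]; nlinarith
  have h2 : -1 ≤ (1 - s) / (1 + s)^2 := by rw [le_div_iff₀ h]; nlinarith
  have h3 : 1 - 3 * s ≤ (1 - s) / (1 + s)^2 := by
    rw [le_div_iff₀ h]; nlinarith [pow_nonneg hs0 2, pow_nonneg hs0 3]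
  refine ⟨abs_le.2 ⟨by linarith, by linarith⟩, by linarith⟩

lemma half_lower {u : ℝ → ℝ} (hu : MemB1p u) (ξ : ℝ) : 7/64 * np u ≤ PP ξ u := by
  obtain ⟨hd, h0, h1, h2⟩ := hu
  have hc := hd.continuous
  have hmf : Continuous (mf ξ) :=
    continuous_iff_continuousAt.2 fun t => (mf_deriv ξ t).continuousAt
  set d : ℝ → ℝ := fun t => (1/4) * ((1 - (t-ξ)^2) / (1 + (t - ξ)^2)^2) with hdd
  have hdc : Continuous d := by
    have : ∀ t : ℝ, (1 + (t - ξ)^2)^2 ≠ 0 := fun t => by positivity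
    rw [hdd]; fun_prop (disch := assumption)
  have hfu : IntegrableOn (fun t => mf ξ t * (u t)^2) (Ioi 0) := by
    refine Integrable.mono' h0 (by fun_prop) (Eventually.of_forall fun t => ?_)
    have := mf_bound ξ t
    rw [Real.norm_of_nonneg (mul_nonneg this.1 (sq_nonneg _))]
    nlinarith [sq_nonneg (u t)]
  have hffu : IntegrableOn (fun t => (mf ξ t)^2 * (u t)^2) (Ioi 0) := by
    refine Integrable.mono' h0 (by fun_prop) (Eventually.of_forall fun t => ?_)
    have := mf_bound ξ t
    rw [Real.norm_of_nonneg (by positivity)]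
    have : (mf ξ t)^2 ≤ 1 := by nlinarith
    nlinarith [sq_nonneg (u t)]
  have hdu : IntegrableOn (fun t => d t * (u t)^2) (Ioi 0) := by
    refine Integrable.mono' h0 (by fun_prop) (Eventually.of_forall fun t => ?_)
    have := (mf_dbound ξ t).1
    rw [norm_mul, Real.norm_eq_abs, Real.norm_of_nonneg (sq_nonneg (u t))]
    exact mul_le_of_le_one_left (sq_nonneg _) this
  have hF : ∀ t, HasDerivAt (fun t => mf ξ t * (u t)^2)
      (d t * (u t)^2 + mf ξ t * (2 * u t * deriv u t)) t := by
    intro t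
    have h := (mf_deriv ξ t).mul ((hd t).hasDerivAt.pow 2)
    exact h.congr_deriv (by simp [hdd])
  have hF' : IntegrableOn (fun t => d t * (u t)^2 + mf ξ t * (2 * u t * deriv u t)) (Ioi 0) :=
    hdu.add (int_cross hc (mf ξ) hmf h1 hffu)
  have ht := tendsto_zero_of_hasDerivAt_of_integrableOn_Ioi (fun t _ => hF t) hF' hfu
  have hI := integral_Ioi_of_hasDerivAt_of_tendsto (hF 0).continuousAt.continuousWithinAt
    (fun t _ => hF t) hF' ht
  have hneg : ∫ t in Ioi (0:ℝ), (d t * (u t)^2 + mf ξ t * (2 * u t * deriv u t)) ≤ 0 := by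
    rw [hI]
    have := mul_nonneg (mf_bound ξ 0).1 (sq_nonneg (u 0))
    linarith
  have hen : IntegrableOn (fun t => (deriv u t)^2 + (t - ξ)^2 * (u t)^2) (Ioi 0) :=
    h1.add (int_shift hc h0 h2 ξ)
  have hmono : ∫ t in Ioi (0:ℝ), (7/64 * (u t)^2) ≤
      ∫ t in Ioi (0:ℝ), (((deriv u t)^2 + (t - ξ)^2 * (u t)^2) +
        (d t * (u t)^2 + mf ξ t * (2 * u t * deriv u t))) := by
    refine integral_mono (h0.const_mul _) (hen.add hF') fun t => ?_
    have hb := mf_bound ξ t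
    have hd2 : (1/4) * (1 - 3 * (t-ξ)^2) ≤ d t := (mf_dbound ξ t).2
    have hsq : (mf ξ t)^2 ≤ 9/64 := by nlinarith
    have key : 7/64 ≤ (t-ξ)^2 + d t - (mf ξ t)^2 := by nlinarith [sq_nonneg (t - ξ)]
    have := mul_le_mul_of_nonneg_right key (sq_nonneg (u t))
    show 7/64 * (u t)^2 ≤ ((deriv u t)^2 + (t - ξ)^2 * (u t)^2) +
        (d t * (u t)^2 + mf ξ t * (2 * u t * deriv u t))
    nlinarith [sq_nonneg (deriv u t + mf ξ t * u t)]
  rw [integral_const_mul, integral_add hen hF'] at hmono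
  unfold np PP
  linarith

/-- Gaussian trial state. -/
def ga (ξ t : ℝ) : ℝ := Real.exp (-(t - ξ)^2 / 2)

lemma ga_sq (ξ t : ℝ) : (ga ξ t)^2 = Real.exp (-1 * (t - ξ)^2) := by
  unfold ga; rw [← Real.exp_nat_mul]; congr 1; push_cast; ring

lemma ga_deriv (ξ t : ℝ) : HasDerivAt (ga ξ) (-(t - ξ) * ga ξ t) t := by
  have h := ((((hasDerivAt_id t).sub_const ξ).pow 2).neg.div_const 2).exp
  exact h.congr_deriv (by simp [ga]; ring)

lemma ga_int_sq (ξ : ℝ) : Integrable (fun t => (ga ξ t)^2) := by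
  simp_rw [ga_sq]
  exact (integrable_exp_neg_mul_sq one_pos).comp_sub_right ξ

lemma ga_int_shift (ξ : ℝ) : Integrable (fun t => (t - ξ)^2 * (ga ξ t)^2) := by
  simp_rw [ga_sq]
  have h := integrable_rpow_mul_exp_neg_mul_sq (b := 1) one_pos (s := 2) (by norm_num)
  have h2 := h.comp_sub_right ξ
  simpa using h2

lemma ga_mem (ξ : ℝ) : MemB1 (ga ξ) := by
  have hd : Differentiable ℝ (ga ξ) := fun t => (ga_deriv ξ t).differentiableAt
  have hc := hd.continuous
  refine ⟨hd, ga_int_sq ξ, ?_, ?_⟩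
  · convert ga_int_shift ξ using 2 with t
    rw [(ga_deriv ξ t).deriv]; ring
  · refine Integrable.mono' (((ga_int_shift ξ).const_mul 2).add ((ga_int_sq ξ).const_mul (2 * ξ^2)))
      (by fun_prop) (Eventually.of_forall fun t => ?_)
    simp only [Pi.add_apply]
    rw [Real.norm_of_nonneg (by positivity)]
    nlinarith [mul_nonneg (sq_nonneg (t - 2 * ξ)) (sq_nonneg (ga ξ t))]

lemma ga_en (ξ t : ℝ) : (deriv (ga ξ) t)^2 + (t - ξ)^2 * (ga ξ t)^2 =
    (ga ξ t)^2 - ((ga ξ t)^2 + (t - ξ) * (2 * ga ξ t * deriv (ga ξ) t)) := by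
  rw [(ga_deriv ξ t).deriv]; ring

lemma ga_nR (ξ : ℝ) : nR (ga ξ) = √Real.pi := by
  unfold nR
  simp_rw [ga_sq]
  rw [integral_sub_right_eq_self (fun t => Real.exp (-1 * t^2)) ξ, integral_gaussian]
  simp

lemma ga_int_F (ξ : ℝ) :
    Integrable (fun t => (ga ξ t)^2 + (t - ξ) * (2 * ga ξ t * deriv (ga ξ) t)) := by
  have hu := ga_mem ξ
  exact hu.2.1.add (int_cross hu.1.continuous (fun t => t - ξ) (by fun_prop) hu.2.2.1
    (ga_int_shift ξ))

lemma ga_PP (ξ : ℝ) : PP ξ (ga ξ) = np (ga ξ) - ξ * Real.exp (-ξ^2) := by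
  have hu := ga_mem ξ
  have hF' := (ga_int_F ξ).integrableOn (s := Ioi 0)
  have hF := (int_lin hu.1.continuous hu.2.1 hu.2.2.2 ξ).integrableOn (s := Ioi 0)
  have ht := tendsto_zero_of_hasDerivAt_of_integrableOn_Ioi (fun t _ => osc_deriv hu.1 ξ t) hF' hF
  have hI := integral_Ioi_of_hasDerivAt_of_tendsto (osc_deriv hu.1 ξ 0).continuousAt.continuousWithinAt
    (fun t _ => osc_deriv hu.1 ξ t) hF' ht
  unfold PP np
  simp_rw [ga_en]
  rw [integral_sub (ga_int_sq ξ).integrableOn hF', hI, ga_sq]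
  simp

lemma ga_tot (ξ : ℝ) : PP ξ (ga ξ) + NN ξ (ga ξ) = nR (ga ξ) := by
  have hu := ga_mem ξ
  have h0 := integral_eq_zero_of_hasDerivAt_of_integrable (fun t => osc_deriv hu.1 ξ t)
    (ga_int_F ξ) (int_lin hu.1.continuous hu.2.1 hu.2.2.2 ξ)
  unfold PP NN
  rw [← split_int (hu.int_en ξ)]
  simp_rw [ga_en]
  rw [integral_sub (ga_int_sq ξ) (ga_int_F ξ), h0, sub_zero]; rfl

lemma ga_nm (ξ : ℝ) (hξ : 1 ≤ ξ) : nm (ga ξ) ≤ Real.exp (-ξ^2) := by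
  unfold nm
  have h1 : ∫ t in Iio (0:ℝ), Real.exp (-ξ^2) * Real.exp t = Real.exp (-ξ^2) := by
    rw [← integral_Iic_eq_integral_Iio, integral_const_mul, integral_exp_Iic]; simp
  rw [← h1]
  refine setIntegral_mono_on (ga_int_sq ξ).integrableOn
    (((integrableOn_exp_Iic 0).mono_set Iio_subset_Iic_self).const_mul _) measurableSet_Iio
    fun t ht => ?_
  rw [ga_sq, ← Real.exp_add, Real.exp_le_exp]
  have : t < 0 := ht
  nlinarith [sq_nonneg t]

lemma ga_QI (a m ξ : ℝ) (ha : 0 < a) (hm : 0 < m) (hξ : 1 ≤ ξ) :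
    QI a m 1 ξ (ga ξ) ≤ Real.exp (-ξ^2) * (-ξ + ξ / m + (1/m + a)) := by
  have h1 := ga_PP ξ
  have h2 := ga_tot ξ
  rw [nR_eq (ga_mem ξ)] at h2
  have h3 : NN ξ (ga ξ) = nm (ga ξ) + ξ * Real.exp (-ξ^2) := by linarith
  rw [QI_eq (ga_mem ξ), h1, h3]
  have h4 := mul_le_mul_of_nonneg_left (ga_nm ξ hξ) (show 0 ≤ 1/m + a by positivity)
  have : ξ / m = ξ * (1/m) := by ring
  rw [this]
  nlinarith

lemma QI_bdd {a m α : ℝ} (ha : 0 < a) (hm : 0 < m) (hα : 0 < α) (ξ : ℝ) {u : ℝ → ℝ}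
    (hu : MemB1 u) : -α * nR u ≤ QI a m α ξ u := by
  rw [QI_eq hu, nR_eq hu]
  have h1 := PP_nonneg ξ u
  have h2 : 0 ≤ 1/m * NN ξ u := mul_nonneg (by positivity) (NN_nonneg ξ u)
  have h3 : 0 ≤ a * α * nm u := mul_nonneg (by positivity) (nm_nonneg u)
  have h4 : 0 ≤ α * nm u := mul_nonneg (by positivity) (nm_nonneg u)
  linarith

lemma ga_ne (ξ : ℝ) : nR (ga ξ) ≠ 0 := by
  rw [ga_nR]; exact (Real.sqrt_pos.2 Real.pi_pos).ne'

lemma mu1_ge {a m α ξ c : ℝ} (h : ∀ u, MemB1 u → c * nR u ≤ QI a m α ξ u) :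
    c ≤ mu1 a m α ξ := by
  refine le_csInf ⟨_, ga ξ, ga_mem ξ, ga_ne ξ, rfl⟩ ?_
  rintro r ⟨u, hu, hn, rfl⟩
  have : 0 < nR u := lt_of_le_of_ne (nR_nonneg u) hn.symm
  rw [le_div_iff₀ this]
  exact h u hu

lemma E_ge {a m α c : ℝ} (h : ∀ ξ u, MemB1 u → c * nR u ≤ QI a m α ξ u) :
    c ≤ sInf (Set.range (mu1 a m α)) := by
  refine le_csInf (Set.range_nonempty _) ?_
  rintro r ⟨ξ, rfl⟩
  exact mu1_ge (h ξ)

lemma E_le {a m α : ℝ} (ha : 0 < a) (hm : 0 < m) (hα : 0 < α) (ξ : ℝ) {u : ℝ → ℝ}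
    (hu : MemB1 u) : sInf (Set.range (mu1 a m α)) * nR u ≤ QI a m α ξ u := by
  by_cases hn : nR u = 0
  · have := QI_bdd ha hm hα ξ hu
    rw [hn] at this ⊢
    linarith
  have hpos : 0 < nR u := lt_of_le_of_ne (nR_nonneg u) (Ne.symm hn)
  rw [← le_div_iff₀ hpos]
  have h1 : sInf (Set.range (mu1 a m α)) ≤ mu1 a m α ξ := by
    refine csInf_le ⟨-α, ?_⟩ ⟨ξ, rfl⟩
    rintro r ⟨η, rfl⟩
    exact mu1_ge fun v hv => QI_bdd ha hm hα η hv
  refine h1.trans (csInf_le ⟨-α, ?_⟩ ⟨u, hu, hn, rfl⟩)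
  rintro r ⟨v, hv, hvn, rfl⟩
  have : 0 < nR v := lt_of_le_of_ne (nR_nonneg v) hvn.symm
  rw [le_div_iff₀ this]
  exact QI_bdd ha hm hα ξ hv

lemma lam_ge {ξ c : ℝ} (h : ∀ u, MemB1p u → c * np u ≤ PP ξ u) : c ≤ lambda1N ξ := by
  have hne : np (ga ξ) ≠ 0 := by
    have : 0 < np (ga ξ) := by
      unfold np
      rw [setIntegral_pos_iff_support_of_nonneg_ae (Eventually.of_forall fun t => sq_nonneg _)
        (ga_int_sq ξ).integrableOn]
      have : Function.support (fun t => (ga ξ t)^2) = univ := by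
        ext t; simp [ga]
      rw [this]; simp
    exact this.ne'
  refine le_csInf ⟨_, ga ξ, (ga_mem ξ).toP, hne, rfl⟩ ?_
  rintro r ⟨u, hu, hn, rfl⟩
  have : 0 < np u := lt_of_le_of_ne (np_nonneg u) hn.symm
  rw [le_div_iff₀ this]
  simpa [qRobin, PP] using h u hu

lemma Theta_ge : 7/64 ≤ Theta0 := by
  refine le_csInf (Set.range_nonempty _) ?_
  rintro r ⟨ξ, rfl⟩
  exact lam_ge fun u hu => half_lower hu ξ

lemma Theta_le (ξ : ℝ) {u : ℝ → ℝ} (hu : MemB1p u) : Theta0 * np u ≤ PP ξ u := by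
  by_cases hn : np u = 0
  · rw [hn, mul_zero]; exact PP_nonneg _ _
  have hpos : 0 < np u := lt_of_le_of_ne (np_nonneg u) (Ne.symm hn)
  rw [← le_div_iff₀ hpos]
  have h1 : Theta0 ≤ lambda1N ξ := by
    refine csInf_le ⟨7/64, ?_⟩ ⟨ξ, rfl⟩
    rintro r ⟨η, rfl⟩
    exact lam_ge fun u hu => half_lower hu η
  refine h1.trans (csInf_le ⟨0, ?_⟩ ⟨u, hu, hn, by simp [qRobin, PP]⟩)
  rintro r ⟨v, hv, hvn, rfl⟩
  refine div_nonneg ?_ (np_nonneg v)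
  simpa [qRobin, PP] using PP_nonneg ξ v

lemma Theta_lt : Theta0 < 1 := by
  have h := Theta_le 1 (ga_mem 1).toP
  rw [ga_PP] at h
  by_contra! hc
  have := mul_le_mul_of_nonneg_right hc (np_nonneg (ga 1))
  have := Real.exp_pos (-1^2)
  linarith

lemma E_lip {a m α β : ℝ} (ha : 0 < a) (hm : 0 < m) (hα : 0 < α) :
    sInf (Set.range (mu1 a m α)) - (1 + a) * |α - β| ≤ sInf (Set.range (mu1 a m β)) := by
  refine E_ge fun ξ u hu => ?_
  have h := E_le ha hm hα ξ hu
  rw [QI_eq hu] at h ⊢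
  have hp := np_nonneg u
  have hn := nm_nonneg u
  have h1 : -|α - β| * (np u) ≤ (α - β) * np u :=
    mul_le_mul_of_nonneg_right (neg_abs_le _) hp
  have h2 : (α - β) * (a * nm u) ≤ |α - β| * (a * nm u) :=
    mul_le_mul_of_nonneg_right (le_abs_self _) (by positivity)
  have h3 : 0 ≤ |α - β| * nm u := by positivity
  have h4 : 0 ≤ a * |α - β| * np u := by positivity
  have h5 := nR_eq hu
  have e : (sInf (Set.range (mu1 a m α)) - (1 + a) * |α - β|) * nR u =
    sInf (Set.range (mu1 a m α)) * nR u - (1 + a) * |α - β| * (np u + nm u) := by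
    rw [sub_mul, ← h5]
  rw [e]
  linarith

lemma E_cont {a m : ℝ} (ha : 0 < a) (hm : 0 < m) :
    ContinuousOn (fun α => sInf (Set.range (mu1 a m α))) (Ioi 0) := by
  have : LipschitzOnWith (⟨1 + a, by positivity⟩ : NNReal)
      (fun α => sInf (Set.range (mu1 a m α))) (Ioi 0) := by
    refine LipschitzOnWith.of_dist_le_mul fun α hα β hβ => ?_
    have h1 := E_lip (β := β) ha hm hα
    have h2 := E_lip (β := α) ha hm hβ
    rw [abs_sub_comm] at h2
    rw [Real.dist_eq, Real.dist_eq, abs_le]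
    show -((1 + a) * |α - β|) ≤ _ ∧ _ ≤ (1 + a) * |α - β|
    constructor <;> linarith
  exact this.continuousOn

lemma E_strict {a m α β : ℝ} (ha : 0 < a) (hm : 0 < m) (hα : 0 < α) (hαβ : α < β)
    (h1 : sInf (Set.range (mu1 a m α)) = 0) (h2 : sInf (Set.range (mu1 a m β)) = 0) : False := by
  have hβ : 0 < β := hα.trans hαβ
  have hr : α / β < 1 := by rwa [div_lt_one hβ]
  have hc : 0 < min 1 (1/m) := by positivity
  have key : min 1 (1/m) * (1 - α/β) ≤ sInf (Set.range (mu1 a m α)) := by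
    refine E_ge fun ξ u hu => ?_
    have h := E_le ha hm hβ ξ hu
    rw [h2, zero_mul, QI_eq hu] at h
    rw [QI_eq hu]
    have hK : min 1 (1/m) * nR u ≤ PP ξ u + 1/m * NN ξ u := by
      have e1 := mul_le_mul_of_nonneg_left (osc hu ξ) hc.le
      have e2 := mul_le_mul_of_nonneg_right (min_le_left 1 (1/m)) (PP_nonneg ξ u)
      have e3 := mul_le_mul_of_nonneg_right (min_le_right 1 (1/m)) (NN_nonneg ξ u)
      linarith
    have hK2 := mul_le_mul_of_nonneg_right hK (show 0 ≤ 1 - α/β by linarith)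
    have h' := mul_nonneg (show 0 ≤ α/β by positivity) h
    have e : α / β * (PP ξ u - β * np u + (1/m * NN ξ u + a * β * nm u)) =
        α / β * (PP ξ u + 1/m * NN ξ u) - α * np u + a * α * nm u := by
      field_simp
      ring
    rw [e] at h'
    linarith
  rw [h1] at key
  have := mul_pos hc (show 0 < 1 - α/β by linarith)
  linarith

lemma E_unique {a m α β : ℝ} (ha : 0 < a) (hm : 0 < m) (hα : 0 < α) (hβ : 0 < β)
    (h1 : sInf (Set.range (mu1 a m α)) = 0) (h2 : sInf (Set.range (mu1 a m β)) = 0) : α = β := by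
  rcases lt_trichotomy α β with h | h | h
  · exact (E_strict ha hm hα h h1 h2).elim
  · exact h
  · exact (E_strict ha hm hβ h h2 h1).elim

lemma E_one_of_le {a m : ℝ} (ha : 0 < a) (hm : 0 < m) (hm1 : m ≤ 1) :
    sInf (Set.range (mu1 a m 1)) = 0 := by
  apply le_antisymm
  · by_contra! hpos
    set e := sInf (Set.range (mu1 a m 1)) with he
    have hpi : 0 < √Real.pi := Real.sqrt_pos.2 Real.pi_pos
    have hT : Tendsto (fun ξ : ℝ => (2/m + a) * (ξ * Real.exp (-ξ))) atTop (𝓝 0) := by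
      have := (Real.tendsto_pow_mul_exp_neg_atTop_nhds_zero 1).const_mul (2/m + a)
      simpa using this
    have hev := hT.eventually (gt_mem_nhds (mul_pos hpos hpi))
    obtain ⟨ξ, hlt, hξ⟩ := (hev.and (eventually_ge_atTop 1)).exists
    have h1 := E_le ha hm one_pos ξ (ga_mem ξ)
    have h2 := ga_QI a m ξ ha hm hξ
    rw [ga_nR, ← he] at h1
    have h3 : -ξ + ξ / m + (1/m + a) ≤ (2/m + a) * ξ := by
      have q1 : 1/m ≤ ξ/m := by gcongr
      have q2 : a ≤ a * ξ := le_mul_of_one_le_right ha.le hξ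
      have q3 : (2/m + a) * ξ = ξ/m + ξ/m + a * ξ := by ring
      linarith
    have h4 : Real.exp (-ξ^2) ≤ Real.exp (-ξ) := Real.exp_le_exp.2 (by nlinarith)
    have h5 : Real.exp (-ξ^2) * (-ξ + ξ / m + (1/m + a)) ≤ Real.exp (-ξ) * ((2/m + a) * ξ) := by
      refine (mul_le_mul_of_nonneg_left h3 (Real.exp_pos _).le).trans
        (mul_le_mul_of_nonneg_right h4 (by positivity))
    have h6 : Real.exp (-ξ) * ((2/m + a) * ξ) = (2/m + a) * (ξ * Real.exp (-ξ)) := by ring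
    linarith
  · refine E_ge fun ξ u hu => ?_
    rw [QI_eq hu, zero_mul]
    have h1 := osc hu ξ
    rw [nR_eq hu] at h1
    have h2 : 1 ≤ 1/m := by rwa [le_div_iff₀ hm, one_mul]
    have h3 := mul_le_mul_of_nonneg_right h2 (NN_nonneg ξ u)
    have h4 : 0 ≤ a * 1 * nm u := mul_nonneg (by positivity) (nm_nonneg u)
    have h5 := nm_nonneg u
    linarith

lemma E_one_neg {a m : ℝ} (ha : 0 < a) (hm1 : 1 < m) :
    sInf (Set.range (mu1 a m 1)) < 0 := by
  have hm : 0 < m := by linarith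
  have hr : 1/m < 1 := by rwa [div_lt_one hm]
  have hd : 0 < 1 - 1/m := by linarith
  set ξ := (1/m + a)/(1 - 1/m) + 1 with hξ
  have hξ1 : 1 ≤ ξ := by
    have : 0 ≤ (1/m + a)/(1 - 1/m) := by positivity
    linarith
  have h1 := E_le ha hm one_pos ξ (ga_mem ξ)
  have h2 := ga_QI a m ξ ha hm hξ1
  rw [ga_nR] at h1
  have h3 : -ξ + ξ / m + (1/m + a) = -(1 - 1/m) := by
    have : ξ * (1 - 1/m) = (1/m + a) + (1 - 1/m) := by
      rw [hξ, add_mul, div_mul_cancel₀ _ hd.ne', one_mul]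
    have e : ξ / m = ξ * (1/m) := by ring
    rw [e]; linarith
  rw [h3] at h2
  have h4 := mul_pos (Real.exp_pos (-ξ^2)) hd
  have hpi : 0 < √Real.pi := Real.sqrt_pos.2 Real.pi_pos
  by_contra! hc
  have := mul_nonneg hc hpi.le
  linarith

lemma E_Theta_pos {a m : ℝ} (ha : 0 < a) (hm1 : 1 < m) :
    0 < sInf (Set.range (mu1 a m Theta0)) := by
  have hm : 0 < m := by linarith
  have hT1 := Theta_lt
  have hT0 : 0 < Theta0 := lt_of_lt_of_le (by norm_num) Theta_ge
  have hr : 1/m < 1 := by rwa [div_lt_one hm]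
  have hd : 0 < 1/m := by positivity
  have hc : 0 < 1/m * (1 - Theta0) := mul_pos hd (by linarith)
  refine lt_of_lt_of_le hc (E_ge fun ξ u hu => ?_)
  rw [QI_eq hu, nR_eq hu]
  have h1 := osc hu ξ
  rw [nR_eq hu] at h1
  have h2 := mul_le_mul_of_nonneg_left h1 hd.le
  have h3 := mul_le_mul_of_nonneg_left (Theta_le ξ hu.toP) (show 0 ≤ 1 - 1/m by linarith)
  have h4 : 0 ≤ a * Theta0 * nm u := mul_nonneg (by positivity) (nm_nonneg u)
  have h5 : 0 ≤ 1/m * Theta0 * nm u := mul_nonneg (by positivity) (nm_nonneg u)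
  linarith

/-- `Θ₀ ∈ (0,1)`; for each `a, m > 0` there is a unique `α(a,m) > 0`
with `inf_ξ μ₁(a,m,α(a,m);ξ) = 0`, it equals `1` if `m ≤ 1`, and lies in
`(Θ₀, 1)` if `m > 1`. -/
theorem exists_unique_alpha (a m : ℝ) (ha : 0 < a) (hm : 0 < m) :
    Theta0 ∈ Ioo (0:ℝ) 1 ∧
    (∃! α : ℝ, 0 < α ∧ sInf (Set.range (mu1 a m α)) = 0) ∧
    ∀ α : ℝ, 0 < α → sInf (Set.range (mu1 a m α)) = 0 →
      (m ≤ 1 → α = 1) ∧ (1 < m → α ∈ Ioo Theta0 1) := by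
  have hT0 : 0 < Theta0 := lt_of_lt_of_le (by norm_num) Theta_ge
  have hT1 := Theta_lt
  have hex : ∃ α : ℝ, 0 < α ∧ sInf (Set.range (mu1 a m α)) = 0 ∧
      (m ≤ 1 → α = 1) ∧ (1 < m → α ∈ Ioo Theta0 1) := by
    rcases le_or_gt m 1 with h | h
    · exact ⟨1, one_pos, E_one_of_le ha hm h, fun _ => rfl, fun h' => absurd h' (not_lt.2 h)⟩
    · have hcont : ContinuousOn (fun α => sInf (Set.range (mu1 a m α))) (Icc Theta0 1) :=
        (E_cont ha hm).mono fun x hx => lt_of_lt_of_le hT0 hx.1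
      obtain ⟨α, hα, h0⟩ := intermediate_value_Ioo' hT1.le hcont
        ⟨E_one_neg ha h, E_Theta_pos ha h⟩
      exact ⟨α, hT0.trans hα.1, h0, fun h' => absurd h (not_lt.2 h'), fun _ => hα⟩
  obtain ⟨α₀, hpos, hz, hle, hgt⟩ := hex
  refine ⟨⟨hT0, hT1⟩, ⟨α₀, ⟨hpos, hz⟩, fun β hβ => E_unique ha hm hβ.1 hpos hβ.2 hz⟩, ?_⟩
  intro β hβ hβz
  obtain rfl := E_unique ha hm hβ hpos hβz hz
  exact ⟨hle, hgt⟩
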